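/- Let g ≥ 2. The images in B³ of the square-free monomials of degree at most 3 in the 2g generators Ā₁,…,Ā_g,B̄₁,…,B̄_g (including the empty product 1) form a basis of B³ as a ℤ/2ℤ-vector space. In particular dim_{ℤ/2ℤ} B³ = 1 + 2g + C(2g,2) + C(2g,3), where C(n,k) is the binomial coefficient. -/

import Mathlib

open MvPolynomial

/-- `V = (ℤ/2ℤ)^{2g}`, with standard basis `A_i = Pi.single (Sum.inl i) 1` and
`B_i = Pi.single (Sum.inr i) 1`. -/
abbrev VV (g : ℕ) := Fin g ⊕ Fin g → ZMod 2

/-- The mod 2 intersection (symplectic) form on `V`, with `A_i · B_i = 1` and all other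
pairings of basis vectors zero. -/
def symF {g : ℕ} (x y : VV g) : ZMod 2 :=
  ∑ i : Fin g, (x (Sum.inl i) * y (Sum.inr i) + x (Sum.inr i) * y (Sum.inl i))

/-- The ideal of relations defining the algebra of boolean polynomials:
`(x+y)‾ = x̄ + ȳ + (x·y)·1` and `x̄² = x̄`. -/
noncomputable def boolRel (g : ℕ) : Ideal (MvPolynomial (VV g) (ZMod 2)) :=
  Ideal.span
    ({q | ∃ x y : VV g, q = X (x + y) - X x - X y - C (symF x y)} ∪
     {q | ∃ x : VV g, q = X x ^ 2 - X x})

/-- The algebra of boolean polynomials on `V`. -/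
abbrev BoolPoly (g : ℕ) := MvPolynomial (VV g) (ZMod 2) ⧸ boolRel g

/-- The generator `x̄` of the boolean algebra, for `x ∈ V`. -/
noncomputable def bgen {g : ℕ} (x : VV g) : BoolPoly g := Ideal.Quotient.mk (boolRel g) (X x)

/-- `B^n`: the subspace of boolean polynomials of degree at most `n`, spanned by
products of at most `n` generators. -/
noncomputable def BoolDeg (g n : ℕ) : Submodule (ZMod 2) (BoolPoly g) :=
  Submodule.span (ZMod 2) {b | ∃ l : List (VV g), l.length ≤ n ∧ b = (l.map bgen).prod}

/-- A linear automorphism of `V` preserving the symplectic form induces a ring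
endomorphism of the boolean algebra, `x̄ ↦ (f x)‾`. -/
noncomputable def actB {g : ℕ} (f : VV g ≃ₗ[ZMod 2] VV g)
    (hf : ∀ x y : VV g, symF (f x) (f y) = symF x y) : BoolPoly g →+* BoolPoly g :=
  Ideal.Quotient.lift (boolRel g)
    ((Ideal.Quotient.mk (boolRel g)).comp (rename (⇑f)).toRingHom)
    (by
      have hle : boolRel g ≤ Ideal.comap (rename (⇑f)).toRingHom (boolRel g) := by
        rw [boolRel, Ideal.span_le]
        rintro q (⟨x, y, rfl⟩ | ⟨x, rfl⟩)
        · have : (rename (⇑f)) (X (x + y) - X x - X y - C (symF x y)) =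
              X (f x + f y) - X (f x) - X (f y) - C (symF (f x) (f y)) := by
            simp [map_add, hf x y]
          refine Ideal.mem_comap.mpr ?_
          simp only [AlgHom.toRingHom_eq_coe, RingHom.coe_coe, this]
          exact Ideal.subset_span (Or.inl ⟨f x, f y, rfl⟩)
        · refine Ideal.mem_comap.mpr ?_
          have : (rename (⇑f)) (X x ^ 2 - X x) =
              (X (f x) ^ 2 - X (f x) : MvPolynomial (VV g) (ZMod 2)) := by simp
          simp only [AlgHom.toRingHom_eq_coe, RingHom.coe_coe, this]
          exact Ideal.subset_span (Or.inr ⟨f x, rfl⟩)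
      intro a ha
      rw [RingHom.comp_apply, Ideal.Quotient.eq_zero_iff_mem]
      exact Ideal.mem_comap.mp (hle ha))

/-- The quadratic form with prescribed values `w` on the standard basis. -/
def quadF {g : ℕ} (w x : VV g) : ZMod 2 :=
  ∑ k, w k * x k + ∑ i : Fin g, x (Sum.inl i) * x (Sum.inr i)

lemma quadF_add {g : ℕ} (w x y : VV g) :
    quadF w (x + y) = quadF w x + quadF w y + symF x y := by
  simp only [quadF, symF, Pi.add_apply, mul_add, add_mul, Finset.sum_add_distrib]
  have h : ∑ i : Fin g, x (Sum.inr i) * y (Sum.inl i)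
      = ∑ i : Fin g, y (Sum.inl i) * x (Sum.inr i) :=
    Finset.sum_congr rfl fun i _ => mul_comm _ _
  rw [h]; ring

lemma zmod2_sq (a : ZMod 2) : a ^ 2 = a := by revert a; decide

/-- Evaluation of boolean polynomials. -/
noncomputable def evB {g : ℕ} (w : VV g) : BoolPoly g →ₐ[ZMod 2] ZMod 2 :=
  Ideal.Quotient.liftₐ (boolRel g) (aeval (quadF w)) (by
    have hle : boolRel g ≤ RingHom.ker (aeval (quadF w) : MvPolynomial (VV g) (ZMod 2) →ₐ[ZMod 2] ZMod 2) := by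
      rw [boolRel, Ideal.span_le]
      rintro q (⟨x, y, rfl⟩ | ⟨x, rfl⟩)
      · simp only [SetLike.mem_coe, RingHom.mem_ker, map_sub, aeval_X, quadF_add]
        simp
        ring
      · simp only [SetLike.mem_coe, RingHom.mem_ker, map_sub, map_pow, aeval_X, zmod2_sq, sub_self]
    intro a ha
    exact RingHom.mem_ker.mp (hle ha))

lemma evB_bgen {g : ℕ} (w x : VV g) : evB w (bgen x) = quadF w x := by
  have h : evB w (bgen x) = aeval (quadF w) (X x : MvPolynomial (VV g) (ZMod 2)) := rfl
  rw [h, aeval_X]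

lemma quadF_single {g : ℕ} (w : VV g) (k : Fin g ⊕ Fin g) :
    quadF w (Pi.single k 1) = w k := by
  have h2 : ∑ i : Fin g, (Pi.single k (1 : ZMod 2) : VV g) (Sum.inl i)
      * (Pi.single k (1 : ZMod 2) : VV g) (Sum.inr i) = 0 := by
    apply Finset.sum_eq_zero
    intro i _
    rcases k with k | k <;> simp [Pi.single_apply]
  rw [quadF, h2]
  simp [Pi.single_apply]

/-- The square-free monomials. -/
noncomputable def monB {g : ℕ} (s : Finset (Fin g ⊕ Fin g)) : BoolPoly g :=
  ∏ k ∈ s, bgen (Pi.single k (1 : ZMod 2))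

lemma evB_monB {g : ℕ} (s t : Finset (Fin g ⊕ Fin g)) :
    evB (fun k => if k ∈ t then 1 else 0) (monB s) = if s ⊆ t then 1 else 0 := by
  simp only [monB, map_prod, evB_bgen, quadF_single]
  rw [Finset.prod_ite_zero]
  simp [Finset.subset_iff]

lemma monB_indep (g : ℕ) :
    LinearIndependent (ZMod 2) (fun s : Finset (Fin g ⊕ Fin g) => monB s) := by
  rw [Fintype.linearIndependent_iff]
  intro c hc t
  induction t using Finset.strongInduction with
  | H t ih =>
    have h := congrArg (evB (fun k => if k ∈ t then 1 else 0)) hc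
    simp only [map_sum, map_smul, evB_monB, map_zero] at h
    rw [Finset.sum_eq_single t] at h
    · simpa using h
    · intro s _ hs
      by_cases hst : s ⊆ t
      · rw [ih s (Finset.ssubset_iff_subset_ne.mpr ⟨hst, hs⟩), zero_smul]
      · simp [hst]
    · simp

lemma bgen_add {g : ℕ} (x y : VV g) :
    bgen (x + y) = bgen x + bgen y + algebraMap (ZMod 2) (BoolPoly g) (symF x y) := by
  have h : X (x + y) - X x - X y - C (symF x y) ∈ boolRel g :=
    Ideal.subset_span (Or.inl ⟨x, y, rfl⟩)
  have h2 := Ideal.Quotient.eq_zero_iff_mem.mpr h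
  simp only [map_sub] at h2
  have h3 : algebraMap (ZMod 2) (BoolPoly g) (symF x y)
      = Ideal.Quotient.mk (boolRel g) (C (symF x y)) := rfl
  rw [h3]
  unfold bgen
  linear_combination h2

lemma bgen_sq {g : ℕ} (x : VV g) : bgen x * bgen x = bgen x := by
  have h : X x ^ 2 - X x ∈ boolRel g := Ideal.subset_span (Or.inr ⟨x, rfl⟩)
  have h2 := Ideal.Quotient.eq_zero_iff_mem.mpr h
  simp only [map_sub, map_pow] at h2
  unfold bgen
  linear_combination h2

lemma bgen_zero {g : ℕ} : bgen (0 : VV g) = 0 := by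
  have h := bgen_add (0 : VV g) 0
  simp [symF] at h
  exact h

/-- The span of the square-free monomials of degree at most `n`. -/
noncomputable def monSpan (g n : ℕ) : Submodule (ZMod 2) (BoolPoly g) :=
  Submodule.span (ZMod 2) {b | ∃ s : Finset (Fin g ⊕ Fin g), s.card ≤ n ∧ monB s = b}

lemma monSpan_mono {g m n : ℕ} (h : m ≤ n) : monSpan g m ≤ monSpan g n := by
  apply Submodule.span_mono
  rintro b ⟨s, hs, rfl⟩
  exact ⟨s, hs.trans h, rfl⟩

lemma single_mul_mem {g n : ℕ} (k : Fin g ⊕ Fin g) {b : BoolPoly g} (hb : b ∈ monSpan g n) :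
    bgen (Pi.single k 1) * b ∈ monSpan g (n + 1) := by
  classical
  induction hb using Submodule.span_induction with
  | mem b h =>
    obtain ⟨s, hs, rfl⟩ := h
    apply Submodule.subset_span
    refine ⟨insert k s, (Finset.card_insert_le k s).trans (by omega), ?_⟩
    by_cases hk : k ∈ s
    · rw [Finset.insert_eq_of_mem hk, monB, ← Finset.mul_prod_erase s _ hk, ← mul_assoc, bgen_sq]
    · rw [monB, Finset.prod_insert hk, monB]
  | zero => simp
  | add x y _ _ hx hy => rw [mul_add]; exact add_mem hx hy
  | smul a x _ hx => rw [mul_smul_comm]; exact Submodule.smul_mem _ _ hx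

lemma bgen_mul_mem {g n : ℕ} {b : BoolPoly g} (hb : b ∈ monSpan g n) (x : VV g) :
    bgen x * b ∈ monSpan g (n + 1) := by
  classical
  have key : ∀ t : Finset (Fin g ⊕ Fin g),
      bgen (∑ k ∈ t, (Pi.single k (x k) : VV g)) * b ∈ monSpan g (n + 1) := by
    intro t
    induction t using Finset.induction_on with
    | empty => simp [bgen_zero]
    | insert k t hk ih =>
      rw [Finset.sum_insert hk, bgen_add, add_mul, add_mul]
      refine add_mem (add_mem ?_ ih) ?_
      · have h01 : x k = 0 ∨ x k = 1 := by generalize x k = a; revert a; decide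
        rcases h01 with h | h
        · simp [h, bgen_zero]
        · rw [h]; exact single_mul_mem k hb
      · rw [← Algebra.smul_def]
        exact Submodule.smul_mem _ _ (monSpan_mono (Nat.le_succ n) hb)
  have h := key Finset.univ
  rwa [Finset.univ_sum_single] at h

lemma list_mem {g : ℕ} (l : List (VV g)) : (l.map bgen).prod ∈ monSpan g l.length := by
  induction l with
  | nil => exact Submodule.subset_span ⟨∅, by simp, by simp [monB]⟩
  | cons x l ih =>
    rw [List.map_cons, List.prod_cons, List.length_cons]
    exact bgen_mul_mem ih x

lemma monSpan_eq (g n : ℕ) : monSpan g n = BoolDeg g n := by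
  apply le_antisymm
  · apply Submodule.span_mono
    rintro b ⟨s, hs, rfl⟩
    refine ⟨s.toList.map (fun k => Pi.single k 1), by simpa using hs, ?_⟩
    rw [List.map_map, monB, ← Finset.prod_map_toList]
    rfl
  · rw [BoolDeg, Submodule.span_le]
    rintro b ⟨l, hl, rfl⟩
    exact monSpan_mono hl (list_mem l)

lemma card_le_three (g : ℕ) : Fintype.card {s : Finset (Fin g ⊕ Fin g) // s.card ≤ 3} =
    1 + 2 * g + (2 * g).choose 2 + (2 * g).choose 3 := by
  classical
  have hc : Fintype.card (Fin g ⊕ Fin g) = 2 * g := by simp [two_mul]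
  rw [Fintype.card_subtype]
  have h : (Finset.univ.filter fun s : Finset (Fin g ⊕ Fin g) => s.card ≤ 3)
      = (Finset.range 4).biUnion (fun i => Finset.powersetCard i Finset.univ) := by
    ext s
    simp [Finset.mem_powersetCard, Nat.lt_succ_iff]
  rw [h, Finset.card_biUnion]
  · simp [Finset.sum_range_succ, ← two_mul]
  · intro i _ j _ hij
    exact Finset.pairwise_disjoint_powersetCard _ hij

/-- for `g ≥ 2`, the images in `B³` of the square-free monomials of
degree at most 3 in the `2g` generators `Ā₁,…,Ā_g,B̄₁,…,B̄_g` (indexed by subsets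
`s ⊆ {A₁,…,A_g,B₁,…,B_g}` with `|s| ≤ 3`, the empty set giving `1`) form a basis of
`B³` over `ℤ/2ℤ`: they are linearly independent and span `B³`.  In particular
`dim B³ = 1 + 2g + C(2g,2) + C(2g,3)`. -/
theorem stmt17 (g : ℕ) (hg : 2 ≤ g) :
    LinearIndependent (ZMod 2)
      (fun s : {s : Finset (Fin g ⊕ Fin g) // s.card ≤ 3} =>
        ∏ k ∈ s.1, bgen (Pi.single k (1 : ZMod 2))) ∧
    Submodule.span (ZMod 2)
      (Set.range (fun s : {s : Finset (Fin g ⊕ Fin g) // s.card ≤ 3} =>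
        ∏ k ∈ s.1, bgen (Pi.single k (1 : ZMod 2)))) = BoolDeg g 3 ∧
    Module.finrank (ZMod 2) (BoolDeg g 3) =
      1 + 2 * g + (2 * g).choose 2 + (2 * g).choose 3 := by
  have hli : LinearIndependent (ZMod 2)
      (fun s : {s : Finset (Fin g ⊕ Fin g) // s.card ≤ 3} =>
        ∏ k ∈ s.1, bgen (Pi.single k (1 : ZMod 2))) :=
    (monB_indep g).comp Subtype.val Subtype.val_injective
  have hsp : Submodule.span (ZMod 2)
      (Set.range (fun s : {s : Finset (Fin g ⊕ Fin g) // s.card ≤ 3} =>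
        ∏ k ∈ s.1, bgen (Pi.single k (1 : ZMod 2)))) = BoolDeg g 3 := by
    rw [← monSpan_eq, monSpan]
    congr 1
    ext b
    constructor
    · rintro ⟨⟨s, hs⟩, rfl⟩
      exact ⟨s, hs, rfl⟩
    · rintro ⟨s, hs, rfl⟩
      exact ⟨⟨s, hs⟩, rfl⟩
  refine ⟨hli, hsp, ?_⟩
  rw [← hsp, finrank_span_eq_card hli]
  exact card_le_three g
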